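/- arXiv:1912.08951 — 3 statements merged into one kernel-verified Lean document; each statement's English description precedes it below -/
import Mathlib

section
/- Let b, c, m ∈ ℕ and ε > 0. If there exists an ε-differentially private algorithm A : ({0,1}^c × {0,1}^b × {0,1})^m → PMF(functions {0,1}^c × {0,1}^b → {0,1}) that is a (1/4,1/4)-PAC learner for ParityThresh_{b,c} with sample complexity m, then there exists an ε-differentially private algorithm B : ({0,1}^b × {0,1})^m → PMF(functions {0,1}^b → {0,1}) that is a (1/4,1/4)-PAC learner for Threshold_b with sample complexity m. -/
open scoped ENNReal

/-- Two databases of size `m` are neighboring if they differ in at most one entry. -/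
def Neighbor {X : Type*} {m : ℕ} (x x' : Fin m → X) : Prop :=
  ∃ i : Fin m, ∀ j : Fin m, j ≠ i → x j = x' j

/-- The probability that a sample from `P` lands in the set `T`. -/
noncomputable def prOf {Y : Type*} (P : PMF Y) (T : Set Y) : ℝ≥0∞ :=
  P.toOuterMeasure T

/-- `ε`-differential privacy for a mechanism operating on databases of size `m`. -/
def DPAlg {X Y : Type*} {m : ℕ} (ε : ℝ) (A : (Fin m → X) → PMF Y) : Prop :=
  ∀ x x' : Fin m → X, Neighbor x x' → ∀ T : Set Y,
    prOf (A x) T ≤ ENNReal.ofReal (Real.exp ε) * prOf (A x') T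

/-- `ε`-differential privacy for a local randomizer. -/
def DPRand {X Y : Type*} (ε : ℝ) (R : X → PMF Y) : Prop :=
  ∀ x x' : X, ∀ T : Set Y,
    prOf (R x) T ≤ ENNReal.ofReal (Real.exp ε) * prOf (R x') T

/-- `m` i.i.d. samples from the distribution `D`. -/
noncomputable def iid {Z : Type*} (D : PMF Z) : (m : ℕ) → PMF (Fin m → Z)
  | 0 => PMF.pure (fun i => i.elim0)
  | m + 1 => (iid D m).bind fun f => D.bind fun z => PMF.pure (Fin.cons z f)

/-- Independent product of finitely many PMFs. -/
noncomputable def pmfPi : (n : ℕ) → {T : Fin n → Type} → (∀ i, PMF (T i)) → PMF (∀ i, T i)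
  | 0, _, _ => PMF.pure (fun i => i.elim0)
  | n + 1, T, P =>
      (P 0).bind fun t0 =>
        (@pmfPi n (fun i => T i.succ) (fun i => P i.succ)).bind fun ts =>
          PMF.pure (Fin.cons t0 ts)

/-- XOR of a finite family of bits. -/
def xorFold {I : Type*} [Fintype I] (f : I → Bool) : Bool :=
  decide ((Finset.univ.filter (fun i => f i = true)).card % 2 = 1)

/-- The parity function `Par_k(x) = ⊕ k_i x_i`. -/
def Par {c : ℕ} (k x : Fin c → Bool) : Bool := xorFold (fun i => k i && x i)

/-- Interpret a bit string as an integer in `{0, …, 2^b − 1}`. -/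
def bitsToNat {b : ℕ} (y : Fin b → Bool) : ℕ :=
  ∑ i : Fin b, if y i then 2 ^ (i : ℕ) else 0

/-- The threshold function `Thr_t(y) = 1` iff `y ≥ t`. -/
def Thr {b : ℕ} (t y : Fin b → Bool) : Bool := decide (bitsToNat t ≤ bitsToNat y)

/-- Generalization error of hypothesis `h` w.r.t. target `c` under distribution `D`. -/
noncomputable def errD {Z L : Type*} (D : PMF Z) (c h : Z → L) : ℝ≥0∞ :=
  prOf D {z | h z ≠ c z}

/-- `(α, β)`-PAC learning for the concept class `C` with sample complexity `m`:
for every concept in `C` and distribution `D` on the domain, when the `m` examples are drawn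
i.i.d. from `D` and labeled by the concept, with probability at least `1 − β` the output
hypothesis has generalization error at most `α`. -/
def PACLearner {Z L : Type*} {m : ℕ} (α β : ℝ) (C : Set (Z → L))
    (A : (Fin m → Z × L) → PMF (Z → L)) : Prop :=
  ∀ c ∈ C, ∀ D : PMF Z,
    ENNReal.ofReal (1 - β) ≤
      prOf ((iid D m).bind fun s => A (fun i => (s i, c (s i))))
        {h | errD D c h ≤ ENNReal.ofReal α}

/-- The class `ParityThresh_{b,c}` of functions `f^{k,t}(x,y) = Par_k(x) ⊕ Thr_t(y)`. -/
def ParityThresh (b c : ℕ) : Set ((Fin c → Bool) × (Fin b → Bool) → Bool) :=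
  {f | ∃ (k : Fin c → Bool) (t : Fin b → Bool), f = fun p => xor (Par k p.1) (Thr t p.2)}

/-- The class `Threshold_b` of threshold functions. -/
def ThresholdClass (b : ℕ) : Set ((Fin b → Bool) → Bool) :=
  {f | ∃ t : Fin b → Bool, f = fun y => Thr t y}

theorem prOf_map {X Y : Type*} (f : X → Y) (P : PMF X) (T : Set Y) :
    prOf (P.map f) T = prOf P (f ⁻¹' T) :=
  PMF.toOuterMeasure_map_apply f P T

theorem iid_map {X Y : Type*} (f : X → Y) (D : PMF X) (m : ℕ) :
    iid (D.map f) m = (iid D m).map fun s i => f (s i) := by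
  induction m with
  | zero =>
    simp only [iid, PMF.pure_map]
    congr 1
    exact Subsingleton.elim _ _
  | succ m ih =>
    simp only [iid, ih, PMF.map_bind, PMF.bind_map, PMF.pure_map, Function.comp_def]
    congr! 6 with s z i
    cases i using Fin.cases <;> simp

theorem Neighbor.map {X Y : Type*} {m : ℕ} {x x' : Fin m → X} (h : Neighbor x x') (f : X → Y) :
    Neighbor (fun i => f (x i)) (fun i => f (x' i)) := by
  obtain ⟨i, hi⟩ := h
  exact ⟨i, fun j hj => congrArg f (hi j hj)⟩

/-- Entrywise preprocessing and arbitrary postprocessing preserve differential privacy. -/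
theorem DPAlg.comp {X X' Y Y' : Type*} {m : ℕ} {ε : ℝ} {A : (Fin m → X) → PMF Y}
    (hA : DPAlg ε A) (f : X' → X) (g : Y → Y') :
    DPAlg ε fun s : Fin m → X' => (A fun i => f (s i)).map g := by
  intro x x' h T
  simp only [prOf_map]
  exact hA _ _ (h.map f) _

theorem errD_map {X Z L : Type*} (f : X → Z) (D : PMF X) (c h : Z → L) :
    errD (D.map f) c h = errD D (c ∘ f) (h ∘ f) :=
  prOf_map f D _

/-- A learner for `C` yields a learner for any class whose concepts are restrictions of
concepts of `C` along `f`. -/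
theorem PACLearner.comap {X Z L : Type*} {m : ℕ} {α β : ℝ} {C : Set (Z → L)} {C' : Set (X → L)}
    {A : (Fin m → Z × L) → PMF (Z → L)} (hA : PACLearner α β C A) (f : X → Z)
    (hC : ∀ c' ∈ C', ∃ c ∈ C, c ∘ f = c') :
    PACLearner α β C' fun s : Fin m → X × L =>
      (A fun i => (f (s i).1, (s i).2)).map fun h => h ∘ f := by
  intro c' hc' D
  obtain ⟨c, hc, rfl⟩ := hC c' hc'
  have key := hA c hc (D.map f)
  simp only [iid_map, PMF.bind_map, errD_map] at key
  rw [← PMF.map_bind, prOf_map]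
  exact key

theorem Par_zero {c : ℕ} (x : Fin c → Bool) : Par (fun _ => false) x = false := by
  simp [Par, xorFold]

/-- from an `ε`-DP `(1/4,1/4)`-PAC learner for `ParityThresh_{b,c}` with sample
complexity `m` one obtains an `ε`-DP `(1/4,1/4)`-PAC learner for `Threshold_b` with sample
complexity `m`. -/
theorem stmt_0 (b c m : ℕ) (ε : ℝ) (hε : 0 < ε)
    (A : (Fin m → ((Fin c → Bool) × (Fin b → Bool)) × Bool) →
          PMF ((Fin c → Bool) × (Fin b → Bool) → Bool))
    (hDP : DPAlg ε A)
    (hPAC : PACLearner (1/4) (1/4) (ParityThresh b c) A) :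
    ∃ B : (Fin m → (Fin b → Bool) × Bool) → PMF ((Fin b → Bool) → Bool),
      DPAlg ε B ∧ PACLearner (1/4) (1/4) (ThresholdClass b) B := by
  have hC : ∀ g ∈ ThresholdClass b, ∃ f ∈ ParityThresh b c,
      f ∘ (fun y => ((fun _ => false : Fin c → Bool), y)) = g := by
    rintro _ ⟨t, rfl⟩
    refine ⟨_, ⟨fun _ => false, t, rfl⟩, ?_⟩
    funext y
    simp only [Function.comp_apply, Par_zero, Bool.false_xor]
  exact ⟨_, hDP.comp (fun p : (Fin b → Bool) × Bool => ((fun _ => false, p.1), p.2)) _,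
    hPAC.comap _ hC⟩
end

section
/- There is a constant C > 0 such that for all b, c, m ∈ ℕ and all ε > 0: every ε-differentially private algorithm in the curator model that is a (1/4,1/4)-PAC learner for ParityThresh_{b,c} with sample complexity m satisfies m ≥ C·b/ε. -/
open scoped ENNReal

/-- Group privacy: any two databases of size `m` are `m * ε`-indistinguishable. -/
theorem DPAlg.group_privacy {X Y : Type*} {m : ℕ} {ε : ℝ} {A : (Fin m → X) → PMF Y}
    (hA : DPAlg ε A) (x x₀ : Fin m → X) (T : Set Y) :
    prOf (A x) T ≤ ENNReal.ofReal (Real.exp ε) ^ m * prOf (A x₀) T := by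
  have hybrid : ∀ k ≤ m, prOf (A fun i => if (i : ℕ) < k then x i else x₀ i) T ≤
      ENNReal.ofReal (Real.exp ε) ^ k * prOf (A x₀) T := by
    intro k
    induction k with
    | zero => intro _; simp
    | succ k ih =>
      intro hk
      refine (hA _ (fun i => if (i : ℕ) < k then x i else x₀ i) ⟨⟨k, hk⟩, ?_⟩ T).trans ?_
      · intro j hj
        have hjk : (j : ℕ) ≠ k := fun h => hj (Fin.ext h)
        have : (j : ℕ) < k + 1 ↔ (j : ℕ) < k := by omega
        simp only [this]
      · rw [pow_succ', mul_assoc]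
        gcongr
        exact ih (by omega)
  simpa using hybrid m le_rfl

theorem prOf_bind_le {X Y : Type*} (P : PMF X) (A : X → PMF Y) (T : Set Y) (B : ℝ≥0∞)
    (h : ∀ x, prOf (A x) T ≤ B) : prOf (P.bind A) T ≤ B := by
  unfold prOf at *
  rw [PMF.toOuterMeasure_bind_apply]
  calc ∑' x, P x * (A x).toOuterMeasure T ≤ ∑' x, P x * B :=
        ENNReal.tsum_le_tsum fun x => by gcongr; exact h x
    _ = B := by rw [ENNReal.tsum_mul_right, P.tsum_coe, one_mul]

/-- If every outcome lies in at most `N` of the sets `G t`, their probabilities sum to at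
most `N`. -/
theorem sum_prOf_le {ι Y : Type*} [Fintype ι] (P : PMF Y) (G : ι → Set Y) (N : ℝ≥0∞)
    (h : ∀ y, ∑ t, (G t).indicator 1 y ≤ N) : ∑ t, prOf P (G t) ≤ N := by
  simp only [prOf, PMF.toOuterMeasure_apply]
  rw [← Summable.tsum_finsetSum (fun _ _ => ENNReal.summable)]
  calc ∑' y, ∑ t, (G t).indicator P y = ∑' y, P y * ∑ t, (G t).indicator 1 y := by
        refine tsum_congr fun y => ?_
        rw [Finset.mul_sum]
        refine Finset.sum_congr rfl fun t _ => ?_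
        by_cases hy : y ∈ G t <;> simp [hy]
    _ ≤ ∑' y, P y * N := ENNReal.tsum_le_tsum fun y => by gcongr; exact h y
    _ = N := by rw [ENNReal.tsum_mul_right, P.tsum_coe, one_mul]

/-- Generating function of the number of mistakes when each bit of a bit string is predicted
from the bits of higher index. -/
theorem sum_prod_mistakes (b : ℕ) (q : Fin b → (Fin b → Bool) → Bool)
    (hq : ∀ i t t', (∀ j, i < j → t j = t' j) → q i t = q i t') (r : ℝ) :
    ∑ t : Fin b → Bool, ∏ i, (if q i t ≠ t i then r else 1) = (1 + r) ^ b := by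
  induction b with
  | zero => simp
  | succ b ih =>
    rw [← (Fin.consEquiv fun _ : Fin (b + 1) => Bool).sum_comp, Fintype.sum_prod_type_right]
    have step : ∀ s : Fin b → Bool,
        ∑ a : Bool, ∏ i, (if q i (Fin.consEquiv (fun _ => Bool) (a, s)) ≠
            Fin.consEquiv (fun _ : Fin (b + 1) => Bool) (a, s) i then r else 1) =
          (1 + r) * ∏ i : Fin b,
            (if q i.succ (Fin.cons false s) ≠ s i then r else 1) := by
      intro s
      have h0 : ∀ a, q 0 (Fin.cons a s : Fin (b + 1) → Bool) = q 0 (Fin.cons false s) := by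
        intro a
        refine hq _ _ _ fun j hj => ?_
        obtain ⟨j, rfl⟩ := Fin.exists_succ_eq.2 hj.ne'
        simp
      have h1 : ∀ (i : Fin b) a, q i.succ (Fin.cons a s : Fin (b + 1) → Bool) =
          q i.succ (Fin.cons false s) := by
        intro i a
        refine hq _ _ _ fun j hj => ?_
        obtain ⟨j, rfl⟩ := Fin.exists_succ_eq.2 (Fin.ne_zero_of_lt hj)
        simp
      simp only [Fin.consEquiv, Equiv.coe_fn_mk, Fin.prod_univ_succ, Fin.cons_zero, Fin.cons_succ,
        h0, h1, ← Finset.sum_mul]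
      congr 1
      cases q 0 (Fin.cons false s) <;> simp [add_comm]
    rw [Finset.sum_congr rfl fun s _ => step s, ← Finset.mul_sum,
      ih (fun i s => q i.succ (Fin.cons false s)), pow_succ']
    intro i t t' h
    refine hq _ _ _ fun j hj => ?_
    obtain ⟨j, rfl⟩ := Fin.exists_succ_eq.2 (Fin.ne_zero_of_lt hj)
    simpa using h j (by simpa using hj)

/-- The fraction of bit strings for which at most a quarter of the bits are mispredicted is
exponentially small. -/
theorem card_few_mistakes_le (b : ℕ) (hb : 0 < b) (q : Fin b → (Fin b → Bool) → Bool)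
    (hq : ∀ i t t', (∀ j, i < j → t j = t' j) → q i t = q i t') :
    ((Finset.univ.filter fun t : Fin b → Bool =>
        4 * (Finset.univ.filter fun i => q i t ≠ t i).card ≤ b).card : ℝ) ≤
      3 / 4 * 2 ^ b * Real.exp (-(1 / 40 * b)) := by
  set W : (Fin b → Bool) → ℕ := fun t => (Finset.univ.filter fun i => q i t ≠ t i).card with hW
  have gen : ∀ r : ℝ, ∑ t, r ^ W t = (1 + r) ^ b := by
    intro r
    rw [← sum_prod_mistakes b q hq r]
    refine Finset.sum_congr rfl fun t _ => ?_
    rw [Finset.prod_ite, Finset.prod_const, Finset.prod_const_one, mul_one]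
  have markov : ∀ r v : ℝ, 0 ≤ r → (∀ t, 4 * W t ≤ b → v ≤ r ^ W t) →
      ((Finset.univ.filter fun t => 4 * W t ≤ b).card : ℝ) * v ≤ (1 + r) ^ b := by
    intro r v hr hv
    rw [← gen r, ← nsmul_eq_mul, ← Finset.sum_const]
    refine (Finset.sum_le_sum fun t ht => hv t (Finset.mem_filter.1 ht).2).trans ?_
    exact Finset.sum_le_sum_of_subset_of_nonneg (Finset.filter_subset _ _)
      fun _ _ _ => by positivity
  have hexp : (39 / 40 : ℝ) ^ b ≤ Real.exp (-(1 / 40 * b)) := by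
    have h1 : (39 / 40 : ℝ) ≤ Real.exp (-(1 / 40)) := by
      have := Real.add_one_le_exp (-(1 / 40 : ℝ))
      linarith
    calc (39 / 40 : ℝ) ^ b ≤ Real.exp (-(1 / 40)) ^ b := by gcongr
      _ = _ := by rw [← Real.exp_nat_mul]; ring_nf
  refine le_trans ?_ (mul_le_mul_of_nonneg_left hexp (by positivity))
  rcases lt_or_ge b 4 with hlt | hge
  · have := markov 0 1 le_rfl fun t ht => by
      have : W t = 0 := by omega
      simp [this]
    rw [mul_one, add_zero, one_pow] at this
    refine this.trans ?_
    interval_cases b <;> norm_num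
  · have := markov ((3 / 4) ^ 4) ((3 / 4) ^ b) (by positivity) fun t ht => by
      rw [← pow_mul]
      exact pow_le_pow_of_le_one (by norm_num) (by norm_num) ht
    rw [← le_div_iff₀ (by positivity), ← div_pow] at this
    refine this.trans ?_
    have h3 : ((1 + (3 / 4) ^ 4) / (3 / 4) : ℝ) = 13480 / 14976 * (2 * (39 / 40)) := by norm_num
    have h4 : (13480 / 14976 : ℝ) ^ b ≤ 3 / 4 :=
      (pow_le_pow_of_le_one (by norm_num) (by norm_num) hge).trans (by norm_num)
    rw [h3, mul_pow, mul_pow, mul_assoc]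
    gcongr

/-- The query of binary search for `t` that decides bit `i`: the bits above `i` agree with `t`,
bit `i` is `0` and the bits below are `1`. -/
def searchPoint {b : ℕ} (t : Fin b → Bool) (i : Fin b) : Fin b → Bool :=
  fun j => if i < j then t j else decide (j < i)

theorem searchPoint_congr {b : ℕ} {t t' : Fin b → Bool} {i : Fin b}
    (h : ∀ j, i < j → t j = t' j) : searchPoint t i = searchPoint t' i := by
  funext j
  unfold searchPoint
  split_ifs with hj
  · exact h j hj
  · rfl

theorem bitsToNat_cons {b : ℕ} (a : Bool) (s : Fin b → Bool) :
    bitsToNat (Fin.cons a s : Fin (b + 1) → Bool) = a.toNat + 2 * bitsToNat s := by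
  simp only [bitsToNat, Fin.sum_univ_succ, Fin.cons_zero, Fin.cons_succ, Fin.val_succ,
    Finset.mul_sum]
  congr 1
  · cases a <;> simp
  · refine Finset.sum_congr rfl fun i _ => ?_
    split_ifs <;> ring

theorem bitsToNat_le_searchPoint_iff {b : ℕ} (t : Fin b → Bool) (i : Fin b) :
    bitsToNat t ≤ bitsToNat (searchPoint t i) ↔ t i = false := by
  induction b with
  | zero => exact i.elim0
  | succ b ih =>
    obtain ⟨a, s, rfl⟩ : ∃ (a : Bool) (s : Fin b → Bool), t = Fin.cons a s :=
      ⟨t 0, Fin.tail t, (Fin.cons_self_tail t).symm⟩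
    cases i using Fin.cases with
    | zero =>
      have : searchPoint (Fin.cons a s : Fin (b + 1) → Bool) 0 = Fin.cons false s := by
        funext j
        cases j using Fin.cases <;> simp [searchPoint]
      rw [this, bitsToNat_cons, bitsToNat_cons]
      cases a <;> simp
    | succ i =>
      have : searchPoint (Fin.cons a s : Fin (b + 1) → Bool) i.succ =
          Fin.cons true (searchPoint s i) := by
        funext j
        cases j using Fin.cases <;> simp [searchPoint]
      rw [this, bitsToNat_cons, bitsToNat_cons, Fin.cons_succ, ← ih s i]
      cases a <;> simp only [Bool.toNat_true, Bool.toNat_false] <;> omega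

theorem Thr_searchPoint {b : ℕ} (t : Fin b → Bool) (i : Fin b) :
    Thr t (searchPoint t i) = !t i := by
  rw [Bool.eq_iff_iff, Thr, decide_eq_true_iff, bitsToNat_le_searchPoint_iff, Bool.not_eq_true']

/-- The uniform distribution on the binary search queries for `t`. -/
noncomputable def searchDist (b c : ℕ) [NeZero b] (t : Fin b → Bool) :
    PMF ((Fin c → Bool) × (Fin b → Bool)) :=
  (PMF.uniformOfFintype (Fin b)).map fun i => (fun _ => false, searchPoint t i)

theorem mistakes_le_of_errD_searchDist_le {b c : ℕ} [NeZero b] (t : Fin b → Bool)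
    (h : (Fin c → Bool) × (Fin b → Bool) → Bool)
    (herr : errD (searchDist b c t) (fun p => xor (Par (fun _ => false) p.1) (Thr t p.2)) h ≤
      ENNReal.ofReal (1 / 4)) :
    4 * (Finset.univ.filter fun i =>
      (!h (fun _ => false, searchPoint t i)) ≠ t i).card ≤ b := by
  classical
  have hb : (b : ℝ≥0∞) ≠ 0 := by exact_mod_cast NeZero.ne b
  have hset : (fun i : Fin b => ((fun _ => false, searchPoint t i) :
        (Fin c → Bool) × (Fin b → Bool))) ⁻¹'
      {z | h z ≠ xor (Par (fun _ => false) z.1) (Thr t z.2)} =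
      {i | (!h (fun _ => false, searchPoint t i)) ≠ t i} := by
    ext i
    simp only [Set.mem_preimage, Set.mem_ofPred_eq, Par_zero, Thr_searchPoint, Bool.false_xor]
    cases h (fun _ => false, searchPoint t i) <;> cases t i <;> simp
  rw [errD, prOf, searchDist, PMF.toOuterMeasure_map_apply, hset,
    PMF.toOuterMeasure_uniformOfFintype_apply, Fintype.card_fin, Fintype.card_subtype,
    ENNReal.div_le_iff hb (ENNReal.natCast_ne_top b)] at herr
  have h4 : (ENNReal.ofReal (1 / 4)) * b = ENNReal.ofReal (1 / 4 * b) := by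
    rw [ENNReal.ofReal_mul (by norm_num), ENNReal.ofReal_natCast]
  rw [h4, ← ENNReal.ofReal_natCast, ENNReal.ofReal_le_ofReal_iff (by positivity)] at herr
  simp only [Set.mem_ofPred_eq] at herr
  have : (4 * (Finset.univ.filter fun i =>
      (!h (fun _ => false, searchPoint t i)) ≠ t i).card : ℝ) ≤ b := by linarith
  exact_mod_cast this

/-- there is a constant `C > 0` such that every `ε`-DP `(1/4,1/4)`-PAC learner
for `ParityThresh_{b,c}` in the curator model has sample complexity `m ≥ C·b/ε`. -/
theorem stmt_1 : ∃ C : ℝ, 0 < C ∧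
    ∀ (b c m : ℕ) (ε : ℝ), 0 < ε →
      ∀ A : (Fin m → ((Fin c → Bool) × (Fin b → Bool)) × Bool) →
            PMF ((Fin c → Bool) × (Fin b → Bool) → Bool),
        DPAlg ε A → PACLearner (1/4) (1/4) (ParityThresh b c) A →
        C * (b : ℝ) / ε ≤ (m : ℝ) := by
  refine ⟨1 / 40, by norm_num, fun b c m ε hε A hDP hPAC => ?_⟩
  rcases Nat.eq_zero_or_pos b with rfl | hb
  · simp
  have : NeZero b := ⟨hb.ne'⟩
  let f (t : Fin b → Bool) : (Fin c → Bool) × (Fin b → Bool) → Bool :=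
    fun p => xor (Par (fun _ => false) p.1) (Thr t p.2)
  let G (t : Fin b → Bool) : Set ((Fin c → Bool) × (Fin b → Bool) → Bool) :=
    {h | errD (searchDist b c t) (f t) h ≤ ENNReal.ofReal (1 / 4)}
  let x₀ : Fin m → ((Fin c → Bool) × (Fin b → Bool)) × Bool :=
    fun _ => ((fun _ => false, fun _ => false), false)
  have lower (t : Fin b → Bool) : ENNReal.ofReal (1 - 1 / 4) ≤
      ENNReal.ofReal (Real.exp ε) ^ m * prOf (A x₀) (G t) :=
    (hPAC (f t) ⟨_, t, rfl⟩ (searchDist b c t)).trans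
      (prOf_bind_le _ _ _ _ fun s => hDP.group_privacy _ x₀ _)
  have upper : ∑ t, prOf (A x₀) (G t) ≤
      ENNReal.ofReal (3 / 4 * 2 ^ b * Real.exp (-(1 / 40 * b))) := by
    refine sum_prOf_le _ _ _ fun h => ?_
    refine le_trans ?_ (ENNReal.ofReal_le_ofReal (card_few_mistakes_le b hb
      (fun i t => !h (fun _ => false, searchPoint t i))
      fun i t t' htt => by simp only [searchPoint_congr htt]))
    rw [ENNReal.ofReal_natCast, Finset.card_filter, Nat.cast_sum]
    refine Finset.sum_le_sum fun t _ => ?_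
    by_cases ht : h ∈ G t
    · rw [if_pos (mistakes_le_of_errD_searchDist_le t h ht)]
      simp [ht]
    · simp [ht]
  have total : ENNReal.ofReal (2 ^ b * (3 / 4)) ≤
      ENNReal.ofReal (Real.exp ε ^ m * (3 / 4 * 2 ^ b * Real.exp (-(1 / 40 * b)))) := by
    calc ENNReal.ofReal (2 ^ b * (3 / 4))
        = ∑ _t : Fin b → Bool, ENNReal.ofReal (1 - 1 / 4) := by
          rw [Finset.sum_const, nsmul_eq_mul, ← ENNReal.ofReal_natCast,
            ← ENNReal.ofReal_mul (by positivity)]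
          norm_num
      _ ≤ ∑ t, ENNReal.ofReal (Real.exp ε) ^ m * prOf (A x₀) (G t) :=
          Finset.sum_le_sum fun t _ => lower t
      _ ≤ _ := by
          rw [← Finset.mul_sum, ENNReal.ofReal_mul (by positivity),
            ENNReal.ofReal_pow (Real.exp_pos ε).le]
          gcongr
  rw [ENNReal.ofReal_le_ofReal_iff (by positivity), ← Real.exp_nat_mul] at total
  have hexp : 1 ≤ Real.exp (m * ε - 1 / 40 * b) := by
    rw [sub_eq_add_neg, Real.exp_add]
    have h2 : (0 : ℝ) < 2 ^ b * (3 / 4) := by positivity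
    refine le_of_mul_le_mul_left ?_ h2
    linarith
  rw [div_le_iff₀ hε]
  have := Real.one_le_exp_iff.1 hexp
  linarith
end

section
/- Let X be a finite set, D_0, D_1 probability distributions on X, ε > 0, and 0 < γ ≤ 1/2. Suppose there exists a non-interactive ε-differentially private protocol in the (m,n)-hybrid model that tests between D_0 and D_1 with success probability 1/2 + γ, i.e., for each j ∈ {0,1}, when all m + n inputs are drawn i.i.d. from D_j, the protocol outputs j with probability at least 1/2 + γ. Then either there exists an ε-differentially private algorithm B : X^m → PMF({0,1}) such that for each j ∈ {0,1}, on m i.i.d. samples from D_j, B outputs j with probability at least 1/2 + γ/4, or there exists a non-interactive ε-differentially private protocol in the local model with n agents such that for each j ∈ {0,1}, on n i.i.d. inputs from D_j, it outputs j with probability at least 1/2 + γ/4. -/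
open scoped ENNReal

/-- The fair mixture of two distributions. -/
noncomputable def fairMix {Y : Type*} (P Q : PMF Y) : PMF Y :=
  (PMF.uniformOfFintype Bool).bind fun b => cond b P Q

theorem fairMix_toReal {Y : Type*} (P Q : PMF Y) (y : Y) :
    (fairMix P Q y).toReal = ((P y).toReal + (Q y).toReal) / 2 := by
  have h : fairMix P Q y = 2⁻¹ * P y + 2⁻¹ * Q y := by
    simp [fairMix, PMF.bind_apply]
  rw [h, ENNReal.toReal_add (ENNReal.mul_ne_top (by simp) (P.apply_ne_top y))
    (ENNReal.mul_ne_top (by simp) (Q.apply_ne_top y))]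
  simp only [ENNReal.toReal_mul, ENNReal.toReal_inv, ENNReal.toReal_ofNat]
  ring

theorem bind_fairMix_const {Y Z : Type*} (P : PMF Y) (g : Y → PMF Z) (C : PMF Z) :
    (P.bind fun y => fairMix (g y) C) = fairMix (P.bind g) C := by
  unfold fairMix
  rw [PMF.bind_comm]
  congr 1
  funext b
  cases b <;> simp

theorem toReal_true_add_toReal_false (P : PMF Bool) :
    (P true).toReal + (P false).toReal = 1 := by
  rw [← ENNReal.toReal_add (P.apply_ne_top _) (P.apply_ne_top _)]
  have h := P.tsum_coe
  rw [tsum_bool, add_comm] at h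
  simp [h]

theorem map_not_apply (P : PMF Bool) (j : Bool) : (P.map not) j = P (!j) := by
  rw [PMF.map_apply, tsum_bool]
  cases j <;> simp

theorem prOf_singleton {Y : Type*} (P : PMF Y) (y : Y) : prOf P {y} = P y :=
  P.toOuterMeasure_apply_singleton y

theorem prOf_bind {Y Z : Type*} (P : PMF Y) (h : Y → PMF Z) (T : Set Z) :
    prOf (P.bind h) T = ∑' y, P y * prOf (h y) T :=
  PMF.toOuterMeasure_bind_apply P h T

/-- A distinguisher with advantage `γ` can be recentred into a tester that is correct with
probability at least `1/2 + γ/4` under both hypotheses. -/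
theorem exists_balanced_tester {Y : Type*} (P : Bool → PMF Y) (g : Y → PMF Bool) {γ : ℝ}
    (hg : (((P false).bind g) true).toReal + γ ≤ (((P true).bind g) true).toReal) :
    ∃ h : Y → PMF Bool, ∀ j : Bool,
      ENNReal.ofReal (1 / 2 + γ / 4) ≤ prOf ((P j).bind h) {j} := by
  refine ⟨fun y => fairMix (g y)
    ((fairMix ((P false).bind g) ((P true).bind g)).map not), fun j => ?_⟩
  rw [prOf_singleton, bind_fairMix_const]
  apply ENNReal.ofReal_le_of_le_toReal
  rw [fairMix_toReal, map_not_apply, fairMix_toReal]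
  have h0 := toReal_true_add_toReal_false ((P false).bind g)
  have h1 := toReal_true_add_toReal_false ((P true).bind g)
  cases j <;> simp only [Bool.not_true, Bool.not_false] <;> linarith

/-- Differential privacy of a mechanism is preserved under post-processing. -/
theorem DPAlg.bind {X Y Z : Type*} {m : ℕ} {ε : ℝ} {A : (Fin m → X) → PMF Y}
    (hA : DPAlg ε A) (h : Y → PMF Z) : DPAlg ε fun x => (A x).bind h := by
  intro x x' hx T
  rw [prOf_bind, prOf_bind, ← ENNReal.tsum_mul_left]
  refine ENNReal.tsum_le_tsum fun y => ?_
  rw [← mul_assoc]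
  gcongr
  simpa only [prOf_singleton] using hA x x' hx {y}

/-- If a function of two independent samples tests between hypotheses `false` and `true` with
advantage `γ`, then one of the two samples alone suffices for advantage `γ/4`. -/
theorem exists_tester_left_or_right {S T : Type*} (P : Bool → PMF S) (Q : Bool → PMF T)
    (f : S → T → PMF Bool) {γ : ℝ}
    (hf : ∀ j, ENNReal.ofReal (1 / 2 + γ) ≤
      prOf ((P j).bind fun s => (Q j).bind fun t => f s t) {j}) :
    (∃ h : S → PMF Bool, ∀ j,
      ENNReal.ofReal (1 / 2 + γ / 4) ≤ prOf ((P j).bind h) {j}) ∨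
    (∃ h : T → PMF Bool, ∀ j,
      ENNReal.ofReal (1 / 2 + γ / 4) ≤ prOf ((Q j).bind h) {j}) := by
  have hf' (j : Bool) :
      1 / 2 + γ ≤ (((P j).bind fun s => (Q j).bind fun t => f s t) j).toReal := by
    rw [← ENNReal.ofReal_le_iff_le_toReal (PMF.apply_ne_top _ _), ← prOf_singleton]
    exact hf j
  have h0 := hf' false
  have h1 := hf' true
  have hs := toReal_true_add_toReal_false ((P false).bind fun s => (Q false).bind fun t => f s t)
  by_cases hc : (((P false).bind fun s => (Q true).bind fun t => f s t) true).toReal + γ ≤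
      (((P true).bind fun s => (Q true).bind fun t => f s t) true).toReal
  · exact Or.inl (exists_balanced_tester P (fun s => (Q true).bind fun t => f s t) hc)
  · refine Or.inr (exists_balanced_tester Q (fun t => (P false).bind fun s => f s t) ?_)
    rw [PMF.bind_comm (Q false), PMF.bind_comm (Q true)]
    linarith

/-- if a non-interactive `ε`-DP protocol in the `(m,n)`-hybrid model tests between
`D_0` and `D_1` with success probability `1/2 + γ`, then either there is an `ε`-DP curator
algorithm on `m` samples succeeding with probability `1/2 + γ/4`, or there is a non-interactive
`ε`-DP local protocol with `n` agents succeeding with probability `1/2 + γ/4`.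
(`j ∈ {0,1}` is encoded by `j : Bool`, with `D j = if j then D1 else D0`.) -/
theorem stmt_5 (X : Type) (D0 D1 : PMF X) (m n : ℕ) (ε γ : ℝ)
    (hε : 0 < ε) (hγ0 : 0 < γ) (hγ : γ ≤ 1 / 2)
    (T0 : Type) (Ti : Fin n → Type)
    (Cur : (Fin m → X) → PMF T0)
    (R : ∀ i : Fin n, X → PMF (Ti i))
    (ref : T0 → (∀ i, Ti i) → PMF Bool)
    (hCur : DPAlg ε Cur) (hR : ∀ i, DPRand ε (R i))
    (hTest : ∀ j : Bool,
      ENNReal.ofReal (1 / 2 + γ) ≤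
        prOf ((iid (if j then D1 else D0) m).bind fun xs =>
               (iid (if j then D1 else D0) n).bind fun ys =>
               (Cur xs).bind fun t0 =>
               (pmfPi n (fun i => R i (ys i))).bind fun ms =>
               ref t0 ms) {j}) :
    (∃ B : (Fin m → X) → PMF Bool, DPAlg ε B ∧
        ∀ j : Bool, ENNReal.ofReal (1 / 2 + γ / 4) ≤
          prOf ((iid (if j then D1 else D0) m).bind B) {j}) ∨
    (∃ (Mi : Fin n → Type) (R' : ∀ i : Fin n, X → PMF (Mi i))
        (ref' : (∀ i, Mi i) → PMF Bool),
        (∀ i, DPRand ε (R' i)) ∧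
        ∀ j : Bool, ENNReal.ofReal (1 / 2 + γ / 4) ≤
          prOf ((iid (if j then D1 else D0) n).bind fun ys =>
                 (pmfPi n (fun i => R' i (ys i))).bind ref') {j}) := by
  let D : Bool → PMF X := fun j => if j then D1 else D0
  let Q : Bool → PMF (∀ i, Ti i) := fun j =>
    (iid (D j) n).bind fun ys => pmfPi n fun i => R i (ys i)
  have hsplit (j : Bool) : ENNReal.ofReal (1 / 2 + γ) ≤
      prOf (((iid (D j) m).bind Cur).bind fun t0 => (Q j).bind fun ms => ref t0 ms) {j} := by
    convert hTest j using 2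
    simp only [Q, D, PMF.bind_bind]
    congr 1
    funext xs
    rw [PMF.bind_comm]
  rcases exists_tester_left_or_right (fun j => (iid (D j) m).bind Cur) Q ref hsplit with
    ⟨h, hh⟩ | ⟨h, hh⟩
  · refine Or.inl ⟨fun xs => (Cur xs).bind h, hCur.bind h, fun j => ?_⟩
    simpa only [D, PMF.bind_bind] using hh j
  · refine Or.inr ⟨Ti, R, h, hR, fun j => ?_⟩
    simpa only [Q, D, PMF.bind_bind] using hh j
end
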